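/- Let P be a probability measure on a measurable space Ω, let A, B be measurable events, and let {C_1, …, C_n} be a Reichenbachian common cause system of size n ≥ 2 for (A, B). Then P(A ∩ B) − P(A)·P(B) > 0. -/

import Mathlib

open MeasureTheory Finset

/-- The probability of an event, as a real number. -/
noncomputable def pr {Ω : Type*} [MeasurableSpace Ω] (P : Measure Ω) (X : Set Ω) : ℝ :=
  (P X).toReal

/-- Conditional probability `P(X | C) = P(X ∩ C) / P(C)`, as a real number. -/
noncomputable def cpr {Ω : Type*} [MeasurableSpace Ω] (P : Measure Ω) (X C : Set Ω) : ℝ :=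
  pr P (X ∩ C) / pr P C

/-- A Reichenbachian common cause system (RCCS) of size `n ≥ 2` for the pair `(A, B)`:
a finite measurable partition of `Ω` with nonzero-probability cells, each of which
screens off `A` from `B`, and whose cells are pairwise probabilistically relevant to
`A` and `B` in the same direction. -/
def IsRCCS {Ω : Type*} [MeasurableSpace Ω] (P : Measure Ω) (A B : Set Ω)
    (n : ℕ) (C : Fin n → Set Ω) : Prop :=
  2 ≤ n ∧
  (∀ i, MeasurableSet (C i)) ∧
  (Pairwise fun i j => Disjoint (C i) (C j)) ∧
  (⋃ i, C i) = Set.univ ∧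
  (∀ i, pr P (C i) ≠ 0) ∧
  (∀ i, cpr P (A ∩ B) (C i) = cpr P A (C i) * cpr P B (C i)) ∧
  (∀ i j, i ≠ j → 0 < (cpr P A (C i) - cpr P A (C j)) * (cpr P B (C i) - cpr P B (C j)))

/-!
By screening-off and total probability, `P(A ∩ B) = ∑ pᵢ aᵢ bᵢ`, `P(A) = ∑ pᵢ aᵢ` and
`P(B) = ∑ pᵢ bᵢ`, where `pᵢ = P(Cᵢ)`, `aᵢ = P(A | Cᵢ)` and `bᵢ = P(B | Cᵢ)`. So the correlation of
`A` and `B` is the covariance of `a` and `b` under the weights `p`. Twice this covariance is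
`∑ pᵢ pⱼ (aᵢ - aⱼ) (bᵢ - bⱼ)`, whose off-diagonal terms are all positive.
-/

section WeightedChebyshev

variable {ι R : Type*} [CommRing R]

theorem sum_sum_weight_mul_sub_mul_sub (s : Finset ι) (p f g : ι → R) :
    ∑ i ∈ s, ∑ j ∈ s, p i * p j * ((f i - f j) * (g i - g j)) =
      2 * ((∑ i ∈ s, p i) * (∑ i ∈ s, p i * (f i * g i)) -
        (∑ i ∈ s, p i * f i) * (∑ i ∈ s, p i * g i)) := by
  have expand (i j : ι) : p i * p j * ((f i - f j) * (g i - g j)) =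
      p i * (f i * g i) * p j + p i * (p j * (f j * g j)) -
        p i * f i * (p j * g j) - p i * g i * (p j * f j) := by
    ring
  simp only [expand, sum_sub_distrib, sum_add_distrib, ← sum_mul_sum]
  ring

theorem sum_weight_mul_mul_sum_weight_mul_lt_of_monovaryOn [LinearOrder R] [IsStrictOrderedRing R]
    {s : Finset ι} {p f g : ι → R} (hp : ∀ i ∈ s, 0 ≤ p i) (hfg : MonovaryOn f g s)
    (hpos : ∃ i ∈ s, ∃ j ∈ s, 0 < p i * p j * ((f i - f j) * (g i - g j))) :
    (∑ i ∈ s, p i * f i) * (∑ i ∈ s, p i * g i) <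
      (∑ i ∈ s, p i) * ∑ i ∈ s, p i * (f i * g i) := by
  have term_nonneg : ∀ i ∈ s, ∀ j ∈ s, 0 ≤ p i * p j * ((f i - f j) * (g i - g j)) :=
    fun i hi j hj => mul_nonneg (mul_nonneg (hp i hi) (hp j hj)) (hfg.sub_mul_sub_nonneg hj hi)
  obtain ⟨i, hi, j, hj, hij⟩ := hpos
  have double_sum_pos : 0 < ∑ i ∈ s, ∑ j ∈ s, p i * p j * ((f i - f j) * (g i - g j)) :=
    sum_pos' (fun i hi => sum_nonneg (term_nonneg i hi))
      ⟨i, hi, sum_pos' (term_nonneg i hi) ⟨j, hj, hij⟩⟩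
  rw [sum_sum_weight_mul_sub_mul_sub] at double_sum_pos
  exact sub_pos.mp (pos_of_mul_pos_right double_sum_pos zero_le_two)

end WeightedChebyshev

section TotalProbability

variable {Ω ι : Type*} [MeasurableSpace Ω] {P : Measure Ω} {C : ι → Set Ω}

theorem measure_eq_tsum_measure_inter_of_iUnion_eq_univ [Countable ι]
    (hmeas : ∀ i, MeasurableSet (C i)) (hdisj : Pairwise fun i j => Disjoint (C i) (C j))
    (hcover : ⋃ i, C i = Set.univ) (X : Set Ω) : P X = ∑' i, P (X ∩ C i) := by
  -- Restricting `P` to `X` gives additivity even if the sets `X ∩ C i` are not measurable.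
  calc P X = P.restrict X (⋃ i, C i) := by rw [hcover, Measure.restrict_apply_univ]
    _ = ∑' i, P.restrict X (C i) := measure_iUnion hdisj hmeas
    _ = ∑' i, P (X ∩ C i) := by simp only [Measure.restrict_apply (hmeas _), Set.inter_comm]

theorem measure_ne_top_of_pr_ne_zero {X : Set Ω} (h : pr P X ≠ 0) : P X ≠ ⊤ :=
  (ENNReal.toReal_ne_zero.mp h).2

theorem pr_mul_cpr {D : Set Ω} (hD : pr P D ≠ 0) (X : Set Ω) :
    pr P D * cpr P X D = pr P (X ∩ D) :=
  mul_div_cancel₀ _ hD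

theorem cpr_univ {D : Set Ω} (hD : pr P D ≠ 0) : cpr P Set.univ D = 1 := by
  rw [cpr, Set.univ_inter, div_self hD]

theorem pr_eq_sum_pr_mul_cpr [Fintype ι]
    (hmeas : ∀ i, MeasurableSet (C i)) (hdisj : Pairwise fun i j => Disjoint (C i) (C j))
    (hcover : ⋃ i, C i = Set.univ) (hne : ∀ i, pr P (C i) ≠ 0) (X : Set Ω) :
    pr P X = ∑ i, pr P (C i) * cpr P X (C i) := by
  have inter_ne_top (i : ι) : P (X ∩ C i) ≠ ⊤ :=
    measure_ne_top_of_subset Set.inter_subset_right (measure_ne_top_of_pr_ne_zero (hne i))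
  calc pr P X = (∑ i, P (X ∩ C i)).toReal := by
        rw [pr, measure_eq_tsum_measure_inter_of_iUnion_eq_univ hmeas hdisj hcover X, tsum_fintype]
    _ = ∑ i, pr P (X ∩ C i) := ENNReal.toReal_sum fun i _ => inter_ne_top i
    _ = ∑ i, pr P (C i) * cpr P X (C i) := by simp only [pr_mul_cpr (hne _)]

end TotalProbability

namespace IsRCCS

variable {Ω : Type*} [MeasurableSpace Ω] {P : Measure Ω} {A B : Set Ω} {n : ℕ} {C : Fin n → Set Ω}

theorem pr_cell_pos (hC : IsRCCS P A B n C) (i : Fin n) : 0 < pr P (C i) := by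
  obtain ⟨-, -, -, -, hne, -, -⟩ := hC
  exact ENNReal.toReal_nonneg.lt_of_ne' (hne i)

theorem pr_eq_sum (hC : IsRCCS P A B n C) (X : Set Ω) :
    pr P X = ∑ i, pr P (C i) * cpr P X (C i) := by
  obtain ⟨-, hmeas, hdisj, hcover, hne, -, -⟩ := hC
  exact pr_eq_sum_pr_mul_cpr hmeas hdisj hcover hne X

theorem pr_univ_eq_sum (hC : IsRCCS P A B n C) : pr P Set.univ = ∑ i, pr P (C i) := by
  simp only [hC.pr_eq_sum Set.univ, cpr_univ (hC.pr_cell_pos _).ne', mul_one]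

theorem pr_inter_eq_sum (hC : IsRCCS P A B n C) :
    pr P (A ∩ B) = ∑ i, pr P (C i) * (cpr P A (C i) * cpr P B (C i)) := by
  rw [hC.pr_eq_sum]
  obtain ⟨-, -, -, -, -, hscreen, -⟩ := hC
  simp only [hscreen]

theorem monovary_cpr (hC : IsRCCS P A B n C) :
    Monovary (fun i => cpr P A (C i)) (fun i => cpr P B (C i)) := by
  obtain ⟨-, -, -, -, -, -, hrel⟩ := hC
  refine monovary_iff_forall_mul_nonneg.mpr fun i j => ?_
  obtain rfl | hij := eq_or_ne j i
  · simp only [sub_self, mul_zero, le_refl]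
  · exact (hrel j i hij).le

theorem exists_cpr_sub_mul_cpr_sub_pos (hC : IsRCCS P A B n C) :
    ∃ i j, 0 < (cpr P A (C i) - cpr P A (C j)) * (cpr P B (C i) - cpr P B (C j)) := by
  obtain ⟨hn, -, -, -, -, -, hrel⟩ := hC
  have : Nontrivial (Fin n) := Fin.nontrivial_iff_two_le.mpr hn
  obtain ⟨i, j, hij⟩ := exists_pair_ne (Fin n)
  exact ⟨i, j, hrel i j hij⟩

end IsRCCS

theorem stmt_4_general {Ω : Type*} [MeasurableSpace Ω] (P : Measure Ω) (A B : Set Ω)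
    (n : ℕ) (C : Fin n → Set Ω) (hC : IsRCCS P A B n C) :
    pr P A * pr P B < pr P Set.univ * pr P (A ∩ B) := by
  obtain ⟨i, j, hij⟩ := hC.exists_cpr_sub_mul_cpr_sub_pos
  rw [hC.pr_eq_sum A, hC.pr_eq_sum B, hC.pr_univ_eq_sum, hC.pr_inter_eq_sum]
  exact sum_weight_mul_mul_sum_weight_mul_lt_of_monovaryOn
    (fun k _ => (hC.pr_cell_pos k).le) (hC.monovary_cpr.monovaryOn _)
    ⟨i, mem_univ i, j, mem_univ j, mul_pos (mul_pos (hC.pr_cell_pos i) (hC.pr_cell_pos j)) hij⟩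

/-- A Reichenbachian common cause system for `(A, B)` entails that `A` and `B` are
positively correlated. -/
theorem stmt_4 {Ω : Type*} [MeasurableSpace Ω] (P : Measure Ω) [IsProbabilityMeasure P]
    (A B : Set Ω) (hA : MeasurableSet A) (hB : MeasurableSet B)
    (n : ℕ) (C : Fin n → Set Ω) (hC : IsRCCS P A B n C) :
    0 < pr P (A ∩ B) - pr P A * pr P B := by
  simpa only [sub_pos, pr, measure_univ, ENNReal.toReal_one, one_mul] using
    stmt_4_general P A B n C hC
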